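/- For every k with 0 ≤ k ≤ n − b − 1, the set I_k = {α_0, α_1, …, α_k} is a differential ideal of DS_{a,b} = {α_0,…,α_{n−b}} with respect to D: I_k is closed under addition, D(I_k) ⊆ I_k, and for every α_i ∈ I_k and every α_j ∈ DS_{a,b} both α_i · α_j ∈ I_k and α_j · α_i ∈ I_k; in fact α_i · α_j = α_0 for all 0 ≤ i, j ≤ n − b − 1. These ideals form a chain I_0 ⊂ I_1 ⊂ ⋯ ⊂ I_{n−b−1}. -/

import Mathlib

/-- Pointwise-max addition on endomorphisms of the chain `Fin N`. -/
def sAdd {N : ℕ} (f g : Fin N → Fin N) : Fin N → Fin N := fun i => max (f i) (g i)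

/-- Multiplication in diagram order: `(f·g)(i) = g (f i)`. -/
def sMul {N : ℕ} (f g : Fin N → Fin N) : Fin N → Fin N := fun i => g (f i)

/-- The element `α_k` of the string `STR{a,b}`: `α_k i = a` if `i ≤ N - k - 1`
    (equivalently `i + k < N`) and `α_k i = b` otherwise. -/
def alpha {N : ℕ} (a b : Fin N) (k : ℕ) : Fin N → Fin N :=
  fun i => if (i : ℕ) + k < N then a else b

/-- The subset `I_k = {α_0, α_1, …, α_k}` of the string. -/
def Iset {N : ℕ} (a b : Fin N) (k : ℕ) : Set (Fin N → Fin N) :=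
  {f | ∃ m ≤ k, f = alpha a b m}

theorem sMul_alpha_small {n : ℕ} (a b : Fin n) (hab : a < b) (i j : ℕ)
    (hj : j ≤ n - (b : ℕ) - 1) : sMul (alpha a b i) (alpha a b j) = alpha a b 0 := by
  have hb := b.isLt
  have hab' : (a : ℕ) < b := hab
  funext x
  have hx := x.isLt
  simp only [sMul, alpha]
  by_cases h : (x : ℕ) + i < n
  · simp only [if_pos h]
    rw [if_pos (by omega), if_pos (by omega)]
  · simp only [if_neg h]
    rw [if_pos (by omega), if_pos (by omega)]

theorem sMul_alpha_top {n : ℕ} (a b : Fin n) (hab : a < b) (i : ℕ) :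
    sMul (alpha a b i) (alpha a b (n - (b : ℕ))) = alpha a b i := by
  have hb := b.isLt
  have hab' : (a : ℕ) < b := hab
  funext x
  simp only [sMul, alpha]
  by_cases h : (x : ℕ) + i < n
  · simp only [if_pos h]
    rw [if_pos (by omega)]
  · simp only [if_neg h]
    rw [if_neg (by omega)]

theorem sAdd_alpha {n : ℕ} (a b : Fin n) (hab : a < b) (i j : ℕ) :
    sAdd (alpha a b i) (alpha a b j) = alpha a b (max i j) := by
  funext x
  simp only [sAdd, alpha]
  by_cases h : (x : ℕ) + i < n <;> by_cases h' : (x : ℕ) + j < n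
  · rw [if_pos h, if_pos h', if_pos (by omega), max_self]
  · rw [if_pos h, if_neg h', if_neg (by omega), max_eq_right hab.le]
  · rw [if_neg h, if_pos h', if_neg (by omega), max_eq_left hab.le]
  · rw [if_neg h, if_neg h', if_neg (by omega), max_self]

/-- For every `k ≤ n−b−1`, the set `I_k = {α_0,…,α_k}` is a
differential ideal of `DS_{a,b} = {α_0,…,α_{n−b}}` with respect to `D`:
closed under addition, `D(I_k) ⊆ I_k`, and absorbing under multiplication
by elements of `DS_{a,b}` on both sides; in fact `α_i · α_j = α_0` for all
`i, j ≤ n−b−1`.  These ideals form a strictly increasing chain. -/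
theorem stmt5 (n : ℕ) (a b : Fin n) (hab : a < b) :
    (∀ k : ℕ, k ≤ n - (b : ℕ) - 1 →
      -- closed under addition
      (∀ f ∈ Iset a b k, ∀ g ∈ Iset a b k, sAdd f g ∈ Iset a b k) ∧
      -- closed under D (with D(α_i) = α_{i−1} via truncated subtraction)
      (∀ i : ℕ, i ≤ k → alpha a b (i - 1) ∈ Iset a b k) ∧
      -- two-sided ideal of DS_{a,b}
      (∀ i : ℕ, i ≤ k → ∀ j : ℕ, j ≤ n - (b : ℕ) →
        sMul (alpha a b i) (alpha a b j) ∈ Iset a b k ∧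
        sMul (alpha a b j) (alpha a b i) ∈ Iset a b k)) ∧
    -- trivial multiplication on N_a
    (∀ i : ℕ, i ≤ n - (b : ℕ) - 1 → ∀ j : ℕ, j ≤ n - (b : ℕ) - 1 →
      sMul (alpha a b i) (alpha a b j) = alpha a b 0) ∧
    -- the ideals form a strictly increasing chain I_0 ⊂ I_1 ⊂ ⋯ ⊂ I_{n−b−1}
    (∀ k : ℕ, k + 1 ≤ n - (b : ℕ) - 1 → Iset a b k ⊂ Iset a b (k + 1)) := by
  refine ⟨fun k hk => ⟨?_, ?_, ?_⟩, ?_, ?_⟩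
  · rintro f ⟨i, hi, rfl⟩ g ⟨j, hj, rfl⟩
    exact ⟨max i j, max_le hi hj, sAdd_alpha a b hab i j⟩
  · intro i hi
    exact ⟨i - 1, by omega, rfl⟩
  · intro i hi j hj
    refine ⟨?_, 0, Nat.zero_le _, sMul_alpha_small a b hab j i (hi.trans hk)⟩
    by_cases h : j ≤ n - (b : ℕ) - 1
    · exact ⟨0, Nat.zero_le _, sMul_alpha_small a b hab i j h⟩
    · obtain rfl : j = n - (b : ℕ) := by omega
      exact ⟨i, hi, sMul_alpha_top a b hab i⟩
  · intro i _ j hj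
    exact sMul_alpha_small a b hab i j hj
  · intro k hk
    refine ⟨?_, ?_⟩
    · rintro f ⟨i, hi, rfl⟩
      exact ⟨i, by omega, rfl⟩
    · intro h
      obtain ⟨m, hm, e⟩ := h ⟨k + 1, le_rfl, rfl⟩
      have e' := congrFun e ⟨n - (k + 1), by omega⟩
      simp only [alpha] at e'
      rw [if_neg (by omega), if_pos (by omega)] at e'
      exact hab.ne e'.symm
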